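/- Let M be a left 𝕆-module and x ∈ M a nonzero element. Then the following are equivalent: (i) x is cyclic; (ii) dim_ℝ ⟨x⟩_𝕆 = 8; (iii) ⟨x⟩_𝕆 is isomorphic as a left 𝕆-module to 𝕆 or to 𝕆̄. Moreover, for any left 𝕆-module M, M is the real linear span of its cyclic elements: M = Span_ℝ 𝒞(M). -/

import Mathlib

noncomputable section

open scoped Quaternion

/-- The octonions, realized as pairs of quaternions via the Cayley–Dickson construction. -/
def Octo : Type := ℍ[ℝ] × ℍ[ℝ]

namespace Octo

instance : AddCommGroup Octo := inferInstanceAs (AddCommGroup (ℍ[ℝ] × ℍ[ℝ]))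
instance : Module ℝ Octo := inferInstanceAs (Module ℝ (ℍ[ℝ] × ℍ[ℝ]))

/-- Build an octonion from a pair of quaternions. -/
def mk (a b : ℍ[ℝ]) : Octo := (a, b)

/-- First quaternion component. -/
def p1 (x : Octo) : ℍ[ℝ] := (show ℍ[ℝ] × ℍ[ℝ] from x).1

/-- Second quaternion component. -/
def p2 (x : Octo) : ℍ[ℝ] := (show ℍ[ℝ] × ℍ[ℝ] from x).2

/-- Cayley–Dickson multiplication: `(a,b)(c,d) = (ac − d̄b, da + bc̄)`. -/
instance : Mul Octo :=
  ⟨fun x y => mk (p1 x * p1 y - star (p2 y) * p2 x) (p2 y * p1 x + p2 x * star (p1 y))⟩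

instance : One Octo := ⟨mk 1 0⟩

/-- Octonion conjugation: for `x = (a,b)`, `x̄ = (ā, −b)`. -/
def conj (x : Octo) : Octo := mk (star (p1 x)) (-(p2 x))

/-- The octonion associator `[x,y,z] = (xy)z − x(yz)`. -/
def assoc (x y z : Octo) : Octo := x * y * z - x * (y * z)

/-- The octonion commutator `[x,y] = xy − yx`. -/
def comm (x y : Octo) : Octo := x * y - y * x

/-- The canonical embedding of the reals into the octonions. -/
def ofReal (r : ℝ) : Octo := r • (1 : Octo)

end Octo

section OMod

variable {M : Type*} [AddCommGroup M] [Module ℝ M]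
variable {N : Type*} [AddCommGroup N] [Module ℝ N]

/-- `IsOMod sm` says that the scalar multiplication `sm : 𝕆 × M → M` makes the real vector
space `M` a left 𝕆-module: `sm` is ℝ-bilinear, unital, and the left associator is
alternating in its two octonion arguments. -/
structure IsOMod (sm : Octo → M → M) : Prop where
  smul_add : ∀ (p : Octo) (m n : M), sm p (m + n) = sm p m + sm p n
  add_smul : ∀ (p q : Octo) (m : M), sm (p + q) m = sm p m + sm q m
  real_smul : ∀ (r : ℝ) (p : Octo) (m : M), sm (r • p) m = r • sm p m
  smul_real : ∀ (r : ℝ) (p : Octo) (m : M), sm p (r • m) = r • sm p m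
  one_smul : ∀ m : M, sm 1 m = m
  alt : ∀ (p q : Octo) (m : M),
    sm (p * q) m - sm p (sm q m) = -(sm (q * p) m - sm q (sm p m))

/-- The left associator `[p,q,m] = (pq)m − p(qm)`. -/
def oLassoc (sm : Octo → M → M) (p q : Octo) (m : M) : M :=
  sm (p * q) m - sm p (sm q m)

/-- The set `𝒜(M)` of associative elements: `[p,q,m] = 0` for all `p,q ∈ 𝕆`. -/
def assocSet (sm : Octo → M → M) : Set M :=
  {m | ∀ p q : Octo, oLassoc sm p q m = 0}

/-- The set `𝒜⁻(M)` of conjugate associative elements: `(pq)m = q(pm)` for all `p,q ∈ 𝕆`. -/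
def conjAssocSet (sm : Octo → M → M) : Set M :=
  {m | ∀ p q : Octo, sm (p * q) m = sm q (sm p m)}

/-- A homomorphism of left 𝕆-modules: an ℝ-linear map commuting with 𝕆-scalar
multiplication. -/
def IsOHom (sm : Octo → M → M) (sm' : Octo → N → N) (f : M → N) : Prop :=
  IsLinearMap ℝ f ∧ ∀ (p : Octo) (m : M), f (sm p m) = sm' p (f m)

/-- Two left 𝕆-modules are isomorphic if there is a bijective homomorphism between them. -/
def OIso (sm : Octo → M → M) (sm' : Octo → N → N) : Prop :=
  ∃ f : M → N, IsOHom sm sm' f ∧ Function.Bijective f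

/-- A submodule: a real subspace closed under 𝕆-scalar multiplication. -/
structure IsOSubmodule (sm : Octo → M → M) (S : Set M) : Prop where
  zero_mem : (0 : M) ∈ S
  add_mem : ∀ {x y : M}, x ∈ S → y ∈ S → x + y ∈ S
  smul_mem : ∀ (r : ℝ) {x : M}, x ∈ S → r • x ∈ S
  osmul_mem : ∀ (p : Octo) {x : M}, x ∈ S → sm p x ∈ S

/-- `⟨m⟩_𝕆`, the smallest submodule containing `m`, as a set. -/
def genSet (sm : Octo → M → M) (m : M) : Set M :=
  ⋂₀ {S : Set M | IsOSubmodule sm S ∧ m ∈ S}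

/-- An element `m` is cyclic if `⟨m⟩_𝕆 = 𝕆m`. -/
def IsOCyclic (sm : Octo → M → M) (m : M) : Prop :=
  genSet sm m = {x | ∃ p : Octo, x = sm p m}

/-- 𝕆-linear independence of a subset `S ⊆ M`: any finite 𝕆-linear combination of
distinct elements of `S` that vanishes has all coefficients zero. -/
def OLinIndep (sm : Octo → M → M) (S : Set M) : Prop :=
  ∀ (n : ℕ) (s : Fin n → M) (r : Fin n → Octo), Function.Injective s → (∀ i, s i ∈ S) →
    (∑ i, sm (r i) (s i)) = 0 → ∀ i, r i = 0

end OMod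

/-- The canonical left 𝕆-module structure on 𝕆 itself. -/
def oSmul : Octo → Octo → Octo := fun p x => p * x

/-- The left 𝕆-module structure `𝕆̄` on 𝕆: `p ·̂ x = p̄x`. -/
def oBarSmul : Octo → Octo → Octo := fun p x => Octo.conj p * x

/-- `⟨m⟩_𝕆` as a real subspace of `M`. -/
def genSubmodule {M : Type*} [AddCommGroup M] [Module ℝ M]
    (sm : Octo → M → M) (m : M) : Submodule ℝ M where
  carrier := genSet sm m
  zero_mem' := Set.mem_sInter.mpr fun _ hS => hS.1.zero_mem
  add_mem' := fun ha hb => Set.mem_sInter.mpr fun S hS =>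
    hS.1.add_mem (Set.mem_sInter.mp ha S hS) (Set.mem_sInter.mp hb S hS)
  smul_mem' := fun r _ hx => Set.mem_sInter.mpr fun S hS =>
    hS.1.smul_mem r (Set.mem_sInter.mp hx S hS)

/-- The induced 𝕆-scalar multiplication on `⟨m⟩_𝕆`. -/
def genSmul {M : Type*} [AddCommGroup M] [Module ℝ M]
    (sm : Octo → M → M) (m : M) :
    Octo → genSubmodule sm m → genSubmodule sm m :=
  fun p y => ⟨sm p y.1, Set.mem_sInter.mpr fun S hS =>
    hS.1.osmul_mem p (Set.mem_sInter.mp y.2 S hS)⟩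

namespace Octo

theorem p1_mk (a b : ℍ[ℝ]) : p1 (mk a b) = a := rfl
theorem p2_mk (a b : ℍ[ℝ]) : p2 (mk a b) = b := rfl
theorem p1_add (x y : Octo) : p1 (x + y) = p1 x + p1 y := rfl
theorem p2_add (x y : Octo) : p2 (x + y) = p2 x + p2 y := rfl
theorem p1_neg (x : Octo) : p1 (-x) = -p1 x := rfl
theorem p2_neg (x : Octo) : p2 (-x) = -p2 x := rfl
theorem p1_zero : p1 0 = 0 := rfl
theorem p2_zero : p2 0 = 0 := rfl
theorem p1_one : p1 1 = 1 := rfl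
theorem p2_one : p2 1 = 0 := rfl
theorem p1_smul (r : ℝ) (x : Octo) : p1 (r • x) = r • p1 x := rfl
theorem p2_smul (r : ℝ) (x : Octo) : p2 (r • x) = r • p2 x := rfl
theorem p1_mul (x y : Octo) : p1 (x * y) = p1 x * p1 y - star (p2 y) * p2 x := rfl
theorem p2_mul (x y : Octo) : p2 (x * y) = p2 y * p1 x + p2 x * star (p1 y) := rfl
theorem p1_conj (x : Octo) : p1 (conj x) = star (p1 x) := rfl
theorem p2_conj (x : Octo) : p2 (conj x) = -p2 x := rfl

theorem ext8 {x y : Octo} (h0 : (p1 x).re = (p1 y).re) (h1 : (p1 x).imI = (p1 y).imI)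
    (h2 : (p1 x).imJ = (p1 y).imJ) (h3 : (p1 x).imK = (p1 y).imK)
    (h4 : (p2 x).re = (p2 y).re) (h5 : (p2 x).imI = (p2 y).imI)
    (h6 : (p2 x).imJ = (p2 y).imJ) (h7 : (p2 x).imK = (p2 y).imK) : x = y :=
  Prod.ext (Quaternion.ext _ _ h0 h1 h2 h3) (Quaternion.ext _ _ h4 h5 h6 h7)

/-- squared norm -/
def nsq (x : Octo) : ℝ :=
  (p1 x).re ^ 2 + (p1 x).imI ^ 2 + (p1 x).imJ ^ 2 + (p1 x).imK ^ 2 +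
  (p2 x).re ^ 2 + (p2 x).imI ^ 2 + (p2 x).imJ ^ 2 + (p2 x).imK ^ 2

theorem nsq_ne {x : Octo} (h : x ≠ 0) : nsq x ≠ 0 := by
  intro h0
  apply h
  unfold nsq at h0
  apply ext8 <;> simp only [p1_zero, p2_zero, Quaternion.re_zero, Quaternion.imI_zero,
    Quaternion.imJ_zero, Quaternion.imK_zero] <;> refine pow_eq_zero_iff (two_ne_zero) |>.1 ?_ <;>
    nlinarith [sq_nonneg (p1 x).re, sq_nonneg (p1 x).imI, sq_nonneg (p1 x).imJ,
      sq_nonneg (p1 x).imK, sq_nonneg (p2 x).re, sq_nonneg (p2 x).imI, sq_nonneg (p2 x).imJ,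
      sq_nonneg (p2 x).imK]

theorem conj_mul_self (x : Octo) : conj x * x = nsq x • (1 : Octo) := by
  apply ext8 <;> simp [p1_mul, p2_mul, p1_conj, p2_conj, p1_smul, p2_smul, p1_one, p2_one, nsq] <;>
    ring

theorem mul_conj_mul (w p : Octo) : (w * conj p) * p = nsq p • w := by
  apply ext8 <;> simp [p1_mul, p2_mul, p1_conj, p2_conj, p1_smul, p2_smul, nsq] <;>
    ring

theorem mul_conj_mul' (w p : Octo) : p * (conj p * w) = nsq p • w := by
  apply ext8 <;> simp [p1_mul, p2_mul, p1_conj, p2_conj, p1_smul, p2_smul, nsq] <;>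
    ring

theorem conj_mul (x y : Octo) : conj (x * y) = conj y * conj x := by
  apply ext8 <;> simp [p1_mul, p2_mul, p1_conj, p2_conj] <;>
    ring

theorem conj_conj (x : Octo) : conj (conj x) = x := by
  apply ext8 <;> simp [p1_conj, p2_conj]

theorem conj_add (x y : Octo) : conj (x + y) = conj x + conj y := by
  apply ext8 <;> simp [p1_conj, p2_conj, p1_add, p2_add] <;> ring

theorem conj_smul (r : ℝ) (y : Octo) : conj (r • y) = r • conj y := by
  apply ext8 <;> simp [p1_conj, p2_conj, p1_smul, p2_smul]

theorem conj_one : conj 1 = 1 := by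
  apply ext8 <;> simp [p1_conj, p2_conj, p1_one, p2_one]

theorem conj_eq (x : Octo) : conj x = (2 * (p1 x).re) • (1 : Octo) + (-1 : ℝ) • x := by
  apply ext8 <;> simp [p1_conj, p2_conj, p1_one, p2_one, p1_smul, p2_smul, p1_add, p2_add,
    p1_neg, p2_neg] <;> ring

theorem smul_mul' (r : ℝ) (x y : Octo) : (r • x) * y = r • (x * y) := by
  apply ext8 <;> simp [p1_mul, p2_mul, p1_smul, p2_smul] <;> ring

theorem mul_smul' (r : ℝ) (x y : Octo) : x * (r • y) = r • (x * y) := by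
  apply ext8 <;> simp [p1_mul, p2_mul, p1_smul, p2_smul] <;> ring

theorem add_mul' (x y z : Octo) : (x + y) * z = x * z + y * z := by
  apply ext8 <;> simp [p1_mul, p2_mul, p1_add, p2_add] <;> ring

theorem one_mul' (x : Octo) : 1 * x = x := by
  apply ext8 <;> simp [p1_mul, p2_mul, p1_one, p2_one]

instance : Module.Finite ℝ Octo := inferInstanceAs (Module.Finite ℝ (ℍ[ℝ] × ℍ[ℝ]))

theorem finrank_octo : Module.finrank ℝ Octo = 8 := by
  have : Module.finrank ℝ (ℍ[ℝ] × ℍ[ℝ]) = 8 := by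
    rw [Module.finrank_prod, Quaternion.finrank_eq_four]
  exact this

/-- octonion from coordinates -/
def oc (a b c d e f g h : ℝ) : Octo := mk ⟨a, b, c, d⟩ ⟨e, f, g, h⟩

theorem oc0 (a b c d e f g h : ℝ) : (p1 (oc a b c d e f g h)).re = a := rfl
theorem oc1 (a b c d e f g h : ℝ) : (p1 (oc a b c d e f g h)).imI = b := rfl
theorem oc2 (a b c d e f g h : ℝ) : (p1 (oc a b c d e f g h)).imJ = c := rfl
theorem oc3 (a b c d e f g h : ℝ) : (p1 (oc a b c d e f g h)).imK = d := rfl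
theorem oc4 (a b c d e f g h : ℝ) : (p2 (oc a b c d e f g h)).re = e := rfl
theorem oc5 (a b c d e f g h : ℝ) : (p2 (oc a b c d e f g h)).imI = f := rfl
theorem oc6 (a b c d e f g h : ℝ) : (p2 (oc a b c d e f g h)).imJ = g := rfl
theorem oc7 (a b c d e f g h : ℝ) : (p2 (oc a b c d e f g h)).imK = h := rfl

/-- imaginary units -/
def E : Fin 7 → Octo := ![oc 0 1 0 0 0 0 0 0, oc 0 0 1 0 0 0 0 0, oc 0 0 0 1 0 0 0 0,
  oc 0 0 0 0 1 0 0 0, oc 0 0 0 0 0 1 0 0, oc 0 0 0 0 0 0 1 0, oc 0 0 0 0 0 0 0 1]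

theorem E_sq (i : Fin 7) : E i * E i = (-1 : ℝ) • (1 : Octo) := by
  fin_cases i <;> apply ext8 <;>
    simp [E, p1_mul, p2_mul, oc0, oc1, oc2, oc3, oc4, oc5, oc6, oc7, p1_neg, p2_neg, p1_smul, p2_smul, p1_one, p2_one]

set_option maxHeartbeats 2000000 in
theorem E_anti (i j : Fin 7) (hij : i ≠ j) : E j * E i = (-1 : ℝ) • (E i * E j) := by
  fin_cases i <;> fin_cases j <;> first | (exact absurd rfl hij) | skip
  all_goals
    apply ext8 <;> simp [E, p1_mul, p2_mul, oc0, oc1, oc2, oc3, oc4, oc5, oc6, oc7, p1_neg, p2_neg, p1_smul, p2_smul]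

theorem expand (x : Octo) : x = (p1 x).re • (1 : Octo) + (p1 x).imI • E 0 + (p1 x).imJ • E 1 +
    (p1 x).imK • E 2 + (p2 x).re • E 3 + (p2 x).imI • E 4 + (p2 x).imJ • E 5 +
    (p2 x).imK • E 6 := by
  apply ext8 <;>
    simp [E, oc0, oc1, oc2, oc3, oc4, oc5, oc6, oc7, p1_neg, p2_neg, p1_smul, p2_smul, p1_add, p2_add, p1_one, p2_one]

theorem conj_E (i : Fin 7) : conj (E i) = (-1 : ℝ) • E i := by
  fin_cases i <;> apply ext8 <;>
    simp [E, oc0, oc1, oc2, oc3, oc4, oc5, oc6, oc7, p1_neg, p2_neg, p1_smul, p2_smul, p1_conj, p2_conj]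

end Octo

open Octo

section Cliff

variable {M : Type*} [AddCommGroup M] [Module ℝ M]

theorem split_one (T : M →ₗ[ℝ] M) (hT : ∀ m, T (T m) = m) (S : Submodule ℝ M) (P : M → Prop)
    (hP : ∀ m, P m → P ((1 / 2 : ℝ) • (m + T m)) ∧ P ((1 / 2 : ℝ) • (m - T m)))
    (h1 : ∀ m, P m → T m = m → m ∈ S) (h2 : ∀ m, P m → T m = -m → m ∈ S) :
    ∀ m, P m → m ∈ S := by
  intro m hm
  have e : m = (1 / 2 : ℝ) • (m + T m) + (1 / 2 : ℝ) • (m - T m) := by module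
  rw [e]
  refine S.add_mem (h1 _ (hP m hm).1 ?_) (h2 _ (hP m hm).2 ?_)
  · rw [map_smul, map_add, hT, add_comm]
  · rw [map_smul, map_sub, hT, ← smul_neg, neg_sub]

theorem keep (T U : M →ₗ[ℝ] M) (hc : ∀ m, U (T m) = T (U m)) (ε : ℝ) (m : M) (hm : U m = ε • m) :
    U ((1 / 2 : ℝ) • (m + T m)) = ε • ((1 / 2 : ℝ) • (m + T m)) ∧
    U ((1 / 2 : ℝ) • (m - T m)) = ε • ((1 / 2 : ℝ) • (m - T m)) := by
  constructor
  · rw [map_smul, map_add, hc, hm, map_smul]; module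
  · rw [map_smul, map_sub, hc, hm, map_smul]; module

theorem split_four (A B C D : M →ₗ[ℝ] M) (S : Submodule ℝ M)
    (hA : ∀ m, A (A m) = m) (hB : ∀ m, B (B m) = m) (hC : ∀ m, C (C m) = m)
    (hD : ∀ m, D (D m) = m)
    (hAB : ∀ m, A (B m) = B (A m)) (hAC : ∀ m, A (C m) = C (A m)) (hAD : ∀ m, A (D m) = D (A m))
    (hBC : ∀ m, B (C m) = C (B m)) (hBD : ∀ m, B (D m) = D (B m)) (hCD : ∀ m, C (D m) = D (C m))
    (H : ∀ a b c d : ℝ, (a = 1 ∨ a = -1) → (b = 1 ∨ b = -1) → (c = 1 ∨ c = -1) →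
      (d = 1 ∨ d = -1) → ∀ m, A m = a • m → B m = b • m → C m = c • m → D m = d • m → m ∈ S) :
    ∀ m, m ∈ S := by
  have one : ∀ m : M, m = (1 : ℝ) • m := fun m => (one_smul ℝ m).symm
  have neg : ∀ m : M, -m = (-1 : ℝ) • m := fun m => by simp
  have s3 : ∀ a b c : ℝ, (a = 1 ∨ a = -1) → (b = 1 ∨ b = -1) → (c = 1 ∨ c = -1) →
      ∀ m, (A m = a • m ∧ B m = b • m ∧ C m = c • m) → m ∈ S := by
    intro a b c ha hb hc
    refine split_one D hD S _ ?_ ?_ ?_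
    · rintro m ⟨h1, h2, h3⟩
      have k1 := keep D A hAD a m h1
      have k2 := keep D B hBD b m h2
      have k3 := keep D C hCD c m h3
      exact ⟨⟨k1.1, k2.1, k3.1⟩, ⟨k1.2, k2.2, k3.2⟩⟩
    · rintro m ⟨h1, h2, h3⟩ h4
      exact H a b c 1 ha hb hc (Or.inl rfl) m h1 h2 h3 (h4.trans (one m))
    · rintro m ⟨h1, h2, h3⟩ h4
      exact H a b c (-1) ha hb hc (Or.inr rfl) m h1 h2 h3 (h4.trans (neg m))
  have s2 : ∀ a b : ℝ, (a = 1 ∨ a = -1) → (b = 1 ∨ b = -1) →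
      ∀ m, (A m = a • m ∧ B m = b • m) → m ∈ S := by
    intro a b ha hb
    refine split_one C hC S _ ?_ ?_ ?_
    · rintro m ⟨h1, h2⟩
      have k1 := keep C A hAC a m h1
      have k2 := keep C B hBC b m h2
      exact ⟨⟨k1.1, k2.1⟩, ⟨k1.2, k2.2⟩⟩
    · rintro m ⟨h1, h2⟩ h4
      exact s3 a b 1 ha hb (Or.inl rfl) m ⟨h1, h2, h4.trans (one m)⟩
    · rintro m ⟨h1, h2⟩ h4
      exact s3 a b (-1) ha hb (Or.inr rfl) m ⟨h1, h2, h4.trans (neg m)⟩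
  have s1 : ∀ a : ℝ, (a = 1 ∨ a = -1) → ∀ m, A m = a • m → m ∈ S := by
    intro a ha
    refine split_one B hB S _ ?_ ?_ ?_
    · intro m h1
      exact keep B A hAB a m h1
    · intro m h1 h4
      exact s2 a 1 ha (Or.inl rfl) m ⟨h1, h4.trans (one m)⟩
    · intro m h1 h4
      exact s2 a (-1) ha (Or.inr rfl) m ⟨h1, h4.trans (neg m)⟩
  intro m
  refine split_one A hA S (fun _ => True) (fun _ _ => ⟨trivial, trivial⟩) ?_ ?_ m trivial
  · intro m _ h4
    exact s1 1 (Or.inl rfl) m (h4.trans (one m))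
  · intro m _ h4
    exact s1 (-1) (Or.inr rfl) m (h4.trans (neg m))

end Cliff

section Main

variable {M : Type*} [AddCommGroup M] [Module ℝ M]

/-- left multiplication by an octonion as a linear map -/
def Lp {sm : Octo → M → M} (h : IsOMod sm) (p : Octo) : M →ₗ[ℝ] M where
  toFun := sm p
  map_add' := h.smul_add p
  map_smul' := fun r m => h.smul_real r p m

/-- the orbit map -/
def Rx {sm : Octo → M → M} (h : IsOMod sm) (x : M) : Octo →ₗ[ℝ] M where
  toFun := fun p => sm p x
  map_add' := fun p q => h.add_smul p q x
  map_smul' := fun r p => h.real_smul r p x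

theorem sm_zero {sm : Octo → M → M} (h : IsOMod sm) (p : Octo) : sm p 0 = 0 := (Lp h p).map_zero
theorem sm_neg {sm : Octo → M → M} (h : IsOMod sm) (p : Octo) (m : M) : sm p (-m) = -sm p m :=
  (Lp h p).map_neg m
theorem zero_sm {sm : Octo → M → M} (h : IsOMod sm) (x : M) : sm 0 x = 0 := (Rx h x).map_zero

theorem sm_sq {sm : Octo → M → M} (h : IsOMod sm) (p : Octo) (m : M) :
    sm p (sm p m) = sm (p * p) m := by
  have := h.alt p p m
  have h2 : (2 : ℝ) • (sm (p * p) m - sm p (sm p m)) = 0 := by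
    rw [two_smul]; nth_rewrite 1 [this]; simp
  have h3 := (smul_eq_zero.1 h2).resolve_left two_ne_zero
  exact (sub_eq_zero.1 h3).symm

theorem sm_conj {sm : Octo → M → M} (h : IsOMod sm) (p : Octo) (m : M) :
    sm (conj p) (sm p m) = nsq p • m := by
  have e : conj p * p = (2 * (p1 p).re) • p + (-1 : ℝ) • (p * p) := by
    rw [conj_eq, add_mul', smul_mul', smul_mul', one_mul']
  have e2 := congrArg (fun q => sm q m) (e.symm.trans (conj_mul_self p))
  simp only [h.add_smul, h.real_smul, h.one_smul] at e2
  rw [conj_eq, h.add_smul, h.real_smul, h.real_smul, h.one_smul, sm_sq h, e2]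

theorem Rx_inj {sm : Octo → M → M} (h : IsOMod sm) {x : M} (hx : x ≠ 0) :
    Function.Injective (Rx h x) := by
  rw [← LinearMap.ker_eq_bot, LinearMap.ker_eq_bot']
  intro p hp
  by_contra hne
  have h1 := sm_conj h p x
  have h2 : sm p x = 0 := hp
  rw [h2, sm_zero h] at h1
  exact (smul_ne_zero (nsq_ne hne) hx) h1.symm

/-- conjugate module -/
theorem conj_mod {sm : Octo → M → M} (h : IsOMod sm) : IsOMod (fun p m => sm (conj p) m) where
  smul_add := fun p => h.smul_add _
  add_smul := fun p q m => by rw [conj_add, h.add_smul]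
  real_smul := fun r p m => by rw [conj_smul, h.real_smul]
  smul_real := fun r p m => h.smul_real _ _ _
  one_smul := fun m => by rw [conj_one, h.one_smul]
  alt := fun p q m => by
    have := h.alt (conj p) (conj q) m
    rw [conj_mul, conj_mul]
    rw [sub_eq_iff_eq_add] at this
    rw [this]; abel

theorem J_sq {sm : Octo → M → M} (h : IsOMod sm) (i : Fin 7) (m : M) :
    sm (E i) (sm (E i) m) = -m := by
  rw [sm_sq h, E_sq, h.real_smul, h.one_smul]; simp

theorem J_anti {sm : Octo → M → M} (h : IsOMod sm) (i j : Fin 7) (hij : j < i) (m : M) :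
    sm (E i) (sm (E j) m) = -sm (E j) (sm (E i) m) := by
  have := h.alt (E i) (E j) m
  rw [E_anti i j hij.ne', h.real_smul] at this
  simp only [neg_smul, one_smul] at this
  have h2 : sm (E i) (sm (E j) m) + sm (E j) (sm (E i) m) = 0 := by
    have h3 := sub_eq_zero.2 this
    rw [← neg_eq_zero, ← h3]; abel
  exact eq_neg_of_add_eq_zero_left h2

/-- triple product operator -/
def T3 {sm : Octo → M → M} (h : IsOMod sm) (i j k : Fin 7) : M →ₗ[ℝ] M :=
  Lp h (E i) ∘ₗ Lp h (E j) ∘ₗ Lp h (E k)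

theorem T3_apply {sm : Octo → M → M} (h : IsOMod sm) (i j k : Fin 7) (m : M) :
    T3 h i j k m = sm (E i) (sm (E j) (sm (E k) m)) := rfl

theorem line_of_T {sm : Octo → M → M} (h : IsOMod sm) (i j k : Fin 7) (hij : i < j) (hjk : j < k)
    (a : M) (ha : T3 h i j k a = -a) : sm (E i) (sm (E j) a) = sm (E k) a := by
  rw [T3_apply] at ha
  have h1 := congrArg (sm (E k)) ha
  rw [J_anti h k i (hij.trans hjk), J_anti h k j hjk, J_sq h, sm_neg h, sm_neg h, sm_neg h] at h1
  rw [neg_neg, sm_neg h] at h1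
  exact neg_injective h1

theorem line6 {sm : Octo → M → M} (h : IsOMod sm) (i j k : Fin 7)
    (an : ∀ m, sm (E j) (sm (E i) m) = -sm (E i) (sm (E j) m))
    (an2 : ∀ m, sm (E k) (sm (E i) m) = -sm (E i) (sm (E k) m))
    (an3 : ∀ m, sm (E k) (sm (E j) m) = -sm (E j) (sm (E k) m))
    (a : M) (ha : sm (E i) (sm (E j) a) = sm (E k) a) :
    sm (E i) (sm (E j) a) = sm (E k) a ∧ sm (E j) (sm (E i) a) = -sm (E k) a ∧
    sm (E j) (sm (E k) a) = sm (E i) a ∧ sm (E k) (sm (E j) a) = -sm (E i) a ∧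
    sm (E k) (sm (E i) a) = sm (E j) a ∧ sm (E i) (sm (E k) a) = -sm (E j) a := by
  have h1 : sm (E i) (sm (E k) a) = -sm (E j) a := by rw [← ha, J_sq h]
  have h2 : sm (E j) (sm (E k) a) = sm (E i) a := by
    rw [← ha, an, J_sq h, sm_neg h, neg_neg]
  refine ⟨ha, by rw [an, ha], h2, by rw [an3, h2], by rw [an2, h1, neg_neg], h1⟩

theorem J_anti' {sm : Octo → M → M} (h : IsOMod sm) (i j : Fin 7) (hij : i ≠ j) (m : M) :
    sm (E i) (sm (E j) m) = -sm (E j) (sm (E i) m) := by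
  rcases lt_or_gt_of_ne hij with h1 | h1
  · rw [J_anti h j i h1, neg_neg]
  · exact J_anti h i j h1 m

theorem assoc_of_lines {sm : Octo → M → M} (h : IsOMod sm) (a : M)
    (hA : sm (E 0) (sm (E 1) a) = sm (E 2) a) (hB : sm (E 0) (sm (E 3) a) = sm (E 4) a)
    (hC : sm (E 1) (sm (E 3) a) = sm (E 5) a) (hD : sm (E 2) (sm (E 3) a) = sm (E 6) a) :
    ∀ p q, sm (p * q) a = sm p (sm q a) := by
  have key : ∀ i j k : Fin 7, i ≠ j → i ≠ k → j ≠ k → sm (E i) (sm (E j) a) = sm (E k) a → _ :=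
    fun i j k hij hik hjk => line6 h i j k (J_anti' h j i hij.symm) (J_anti' h k i hik.symm)
      (J_anti' h k j hjk.symm) a
  obtain ⟨a1, a2, a3, a4, a5, a6⟩ := key 0 1 2 (by decide) (by decide) (by decide) hA
  obtain ⟨b1, b2, b3, b4, b5, b6⟩ := key 0 3 4 (by decide) (by decide) (by decide) hB
  obtain ⟨c1, c2, c3, c4, c5, c6⟩ := key 1 3 5 (by decide) (by decide) (by decide) hC
  obtain ⟨d1, d2, d3, d4, d5, d6⟩ := key 2 3 6 (by decide) (by decide) (by decide) hD
  have hF : sm (E 0) (sm (E 6) a) = sm (E 5) a := by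
    rw [← hD, J_anti' h 2 3 (by decide), sm_neg h, J_anti' h 0 3 (by decide), a6, sm_neg h,
      J_anti' h 3 1 (by decide), hC]; simp
  have hG : sm (E 1) (sm (E 4) a) = sm (E 6) a := by
    rw [← hB, J_anti' h 0 3 (by decide), sm_neg h, J_anti' h 1 3 (by decide), a2, sm_neg h,
      J_anti' h 3 2 (by decide), hD]; simp
  have hH : sm (E 2) (sm (E 5) a) = sm (E 4) a := by
    rw [← hC, J_anti' h 1 3 (by decide), sm_neg h, J_anti' h 2 3 (by decide), a4, sm_neg h,
      J_anti' h 3 0 (by decide), hB]; simp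
  obtain ⟨f1, f2, f3, f4, f5, f6⟩ := key 0 6 5 (by decide) (by decide) (by decide) hF
  obtain ⟨g1, g2, g3, g4, g5, g6⟩ := key 1 4 6 (by decide) (by decide) (by decide) hG
  obtain ⟨i1, i2, i3, i4, i5, i6⟩ := key 2 5 4 (by decide) (by decide) (by decide) hH
  intro p q
  rw [expand (p * q)]
  conv_rhs => rw [expand q, expand p]
  simp only [h.add_smul, h.real_smul, h.one_smul, h.smul_add, h.smul_real, J_sq h,
    a1, a2, a3, a4, a5, a6, b1, b2, b3, b4, b5, b6, c1, c2, c3, c4, c5, c6,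
    d1, d2, d3, d4, d5, d6, f1, f2, f3, f4, f5, f6, g1, g2, g3, g4, g5, g6,
    i1, i2, i3, i4, i5, i6]
  simp only [p1_mul, p2_mul, Quaternion.re_sub, Quaternion.imI_sub, Quaternion.imJ_sub,
    Quaternion.imK_sub, Quaternion.re_add, Quaternion.imI_add, Quaternion.imJ_add,
    Quaternion.imK_add, Quaternion.re_mul, Quaternion.imI_mul, Quaternion.imJ_mul,
    Quaternion.imK_mul, Quaternion.re_star, Quaternion.imI_star, Quaternion.imJ_star,
    Quaternion.imK_star]
  module

theorem assoc_of_T {sm : Octo → M → M} (h : IsOMod sm) (a : M)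
    (hA : T3 h 0 1 2 a = -a) (hB : T3 h 0 3 4 a = -a)
    (hC : T3 h 1 3 5 a = -a) (hD : T3 h 2 3 6 a = -a) :
    ∀ p q, sm (p * q) a = sm p (sm q a) :=
  assoc_of_lines h a (line_of_T h _ _ _ (by decide) (by decide) a hA)
    (line_of_T h _ _ _ (by decide) (by decide) a hB)
    (line_of_T h _ _ _ (by decide) (by decide) a hC)
    (line_of_T h _ _ _ (by decide) (by decide) a hD)

theorem T3_conj {sm : Octo → M → M} (h : IsOMod sm) (i j k : Fin 7) (a : M) :
    T3 (conj_mod h) i j k a = - T3 h i j k a := by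
  simp only [T3_apply, conj_E, h.real_smul, h.smul_real]
  module

theorem conjAssoc_of_T {sm : Octo → M → M} (h : IsOMod sm) (a : M)
    (hA : T3 h 0 1 2 a = a) (hB : T3 h 0 3 4 a = a)
    (hC : T3 h 1 3 5 a = a) (hD : T3 h 2 3 6 a = a) :
    ∀ p q, sm (p * q) a = sm q (sm p a) := by
  intro p q
  have := assoc_of_T (conj_mod h) a (by rw [T3_conj h, hA]) (by rw [T3_conj h, hB])
    (by rw [T3_conj h, hC]) (by rw [T3_conj h, hD]) (conj q) (conj p)
  simpa only [Octo.conj_mul, Octo.conj_conj] using this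

/-- good elements -/
def Good (sm : Octo → M → M) (a : M) : Prop :=
  (∀ p q, sm (p * q) a = sm p (sm q a)) ∨ (∀ p q, sm (p * q) a = sm q (sm p a))

/-- span of multiples of good elements -/
def SS (sm : Octo → M → M) : Submodule ℝ M :=
  Submodule.span ℝ {m | ∃ p a, Good sm a ∧ m = sm p a}

theorem SS_closed {sm : Octo → M → M} (h : IsOMod sm) (q : Octo) (m : M) (hm : m ∈ SS sm) :
    sm q m ∈ SS sm := by
  have : SS sm ≤ (SS sm).comap (Lp h q) := by
    unfold SS
    rw [Submodule.span_le]
    rintro _ ⟨p, a, ha, rfl⟩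
    apply Submodule.subset_span
    rcases ha with h1 | h1
    · exact ⟨q * p, a, Or.inl h1, (h1 q p).symm⟩
    · exact ⟨p * q, a, Or.inr h1, (h1 p q).symm⟩
  exact this hm

theorem mem_SS_of_J {sm : Octo → M → M} (h : IsOMod sm) (i : Fin 7) (m : M)
    (hm : Good sm (sm (E i) m)) : m ∈ SS sm := by
  have : sm (E i) m ∈ SS sm := Submodule.subset_span ⟨1, _, hm, (h.one_smul _).symm⟩
  have h2 := SS_closed h (E i) _ this
  rw [J_sq h] at h2
  simpa using h2

theorem T3_J_mem {sm : Octo → M → M} (h : IsOMod sm) (i j k l : Fin 7) (hij : i ≠ j) (hik : i ≠ k)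
    (hjk : j ≠ k) (hl : l = i ∨ l = j ∨ l = k) (m : M) :
    T3 h i j k (sm (E l) m) = sm (E l) (T3 h i j k m) := by
  simp only [T3_apply]
  rcases hl with rfl | rfl | rfl
  · rw [J_anti' h k l hik.symm, sm_neg h, J_anti' h j l hij.symm, neg_neg]
  · rw [J_anti' h k l hjk.symm, sm_neg h, sm_neg h, J_anti' h i l hij, neg_neg]
  · rw [J_anti' h l i hik.symm, J_anti' h l j hjk.symm, sm_neg h, neg_neg]

theorem T3_J_not_mem {sm : Octo → M → M} (h : IsOMod sm) (i j k l : Fin 7)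
    (h1 : l ≠ i) (h2 : l ≠ j) (h3 : l ≠ k) (m : M) :
    T3 h i j k (sm (E l) m) = -sm (E l) (T3 h i j k m) := by
  simp only [T3_apply]
  rw [J_anti' h k l h3.symm, sm_neg h, J_anti' h j l h2.symm, sm_neg h, sm_neg h,
    J_anti' h i l h1.symm, neg_neg]

theorem T3_sq {sm : Octo → M → M} (h : IsOMod sm) (i j k : Fin 7) (hij : i ≠ j) (hik : i ≠ k)
    (hjk : j ≠ k) (m : M) : T3 h i j k (T3 h i j k m) = m := by
  rw [T3_apply h i j k m, T3_J_mem h i j k i hij hik hjk (by simp),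
    T3_J_mem h i j k j hij hik hjk (by simp), T3_J_mem h i j k k hij hik hjk (by simp), T3_apply,
    J_anti' h k i hik.symm, J_anti' h k j hjk.symm, J_sq h]
  simp only [sm_neg h, neg_neg]
  rw [J_anti' h j i hij.symm, J_sq h]
  simp only [sm_neg h, neg_neg]
  rw [J_sq h, neg_neg]

theorem SS_all {sm : Octo → M → M} (h : IsOMod sm) : ∀ m, m ∈ SS sm := by
  have sw : ∀ i j k l : Fin 7, (l ≠ i ∧ l ≠ j ∧ l ≠ k) → ∀ m, 
      T3 h i j k (sm (E l) m) = -sm (E l) (T3 h i j k m) :=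
    fun i j k l hl m => T3_J_not_mem h i j k l hl.1 hl.2.1 hl.2.2 m
  have sc : ∀ i j k l : Fin 7, (i ≠ j ∧ i ≠ k ∧ j ≠ k ∧ (l = i ∨ l = j ∨ l = k)) → ∀ m, 
      T3 h i j k (sm (E l) m) = sm (E l) (T3 h i j k m) :=
    fun i j k l hl m => T3_J_mem h i j k l hl.1 hl.2.1 hl.2.2.1 hl.2.2.2 m
  refine split_four (T3 h 0 1 2) (T3 h 0 3 4) (T3 h 1 3 5) (T3 h 2 3 6) (SS sm)
    (T3_sq h _ _ _ (by decide) (by decide) (by decide))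
    (T3_sq h _ _ _ (by decide) (by decide) (by decide))
    (T3_sq h _ _ _ (by decide) (by decide) (by decide))
    (T3_sq h _ _ _ (by decide) (by decide) (by decide)) ?_ ?_ ?_ ?_ ?_ ?_ ?_
  · intro m
    rw [T3_apply h 0 3 4, T3_apply h 0 3 4, sc 0 1 2 0 (by decide), sw 0 1 2 3 (by decide),
      sw 0 1 2 4 (by decide)]
    simp only [sm_neg h, neg_neg]
  · intro m
    rw [T3_apply h 1 3 5, T3_apply h 1 3 5, sc 0 1 2 1 (by decide), sw 0 1 2 3 (by decide),
      sw 0 1 2 5 (by decide)]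
    simp only [sm_neg h, neg_neg]
  · intro m
    rw [T3_apply h 2 3 6, T3_apply h 2 3 6, sc 0 1 2 2 (by decide), sw 0 1 2 3 (by decide),
      sw 0 1 2 6 (by decide)]
    simp only [sm_neg h, neg_neg]
  · intro m
    rw [T3_apply h 1 3 5, T3_apply h 1 3 5, sw 0 3 4 1 (by decide), sc 0 3 4 3 (by decide),
      sw 0 3 4 5 (by decide)]
    simp only [sm_neg h, neg_neg]
  · intro m
    rw [T3_apply h 2 3 6, T3_apply h 2 3 6, sw 0 3 4 2 (by decide), sc 0 3 4 3 (by decide),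
      sw 0 3 4 6 (by decide)]
    simp only [sm_neg h, neg_neg]
  · intro m
    rw [T3_apply h 2 3 6, T3_apply h 2 3 6, sw 1 3 5 2 (by decide), sc 1 3 5 3 (by decide),
      sw 1 3 5 6 (by decide)]
    simp only [sm_neg h, neg_neg]
  intro a b c d ha hb hc hd m hA hB hC hD
  have good0 : ∀ n : M, Good sm n → n ∈ SS sm := fun n hn =>
    Submodule.subset_span ⟨1, n, hn, (h.one_smul _).symm⟩
  -- how the four signs change under `E l`
  have gm : ∀ l : Fin 7,
      (T3 h 0 1 2 (sm (E l) m) = ((if l = 0 ∨ l = 1 ∨ l = 2 then 1 else -1) * a) • sm (E l) m) ∧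
      (T3 h 0 3 4 (sm (E l) m) = ((if l = 0 ∨ l = 3 ∨ l = 4 then 1 else -1) * b) • sm (E l) m) ∧
      (T3 h 1 3 5 (sm (E l) m) = ((if l = 1 ∨ l = 3 ∨ l = 5 then 1 else -1) * c) • sm (E l) m) ∧
      (T3 h 2 3 6 (sm (E l) m) = ((if l = 2 ∨ l = 3 ∨ l = 6 then 1 else -1) * d) • sm (E l) m) := by
    have aux : ∀ (i j k l : Fin 7) (e : ℝ), (i ≠ j ∧ i ≠ k ∧ j ≠ k) → T3 h i j k m = e • m →
        T3 h i j k (sm (E l) m) = ((if l = i ∨ l = j ∨ l = k then 1 else -1) * e) • sm (E l) m := by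
      intro i j k l e hd he
      split_ifs with hl
      · rw [sc i j k l ⟨hd.1, hd.2.1, hd.2.2, hl⟩, he, h.smul_real, one_mul]
      · simp only [not_or] at hl
        rw [sw i j k l hl, he, h.smul_real]; module
    exact fun l => ⟨aux _ _ _ l a (by decide) hA, aux _ _ _ l b (by decide) hB,
      aux _ _ _ l c (by decide) hC, aux _ _ _ l d (by decide) hD⟩
  have fin : ∀ l : Fin 7, ∀ s : ℝ, (s = 1 ∨ s = -1) →
      ((if l = 0 ∨ l = 1 ∨ l = 2 then 1 else -1) * a = s) →
      ((if l = 0 ∨ l = 3 ∨ l = 4 then 1 else -1) * b = s) →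
      ((if l = 1 ∨ l = 3 ∨ l = 5 then 1 else -1) * c = s) →
      ((if l = 2 ∨ l = 3 ∨ l = 6 then 1 else -1) * d = s) → m ∈ SS sm := by
    intro l s hs e1 e2 e3 e4
    obtain ⟨g1, g2, g3, g4⟩ := gm l
    rw [e1] at g1; rw [e2] at g2; rw [e3] at g3; rw [e4] at g4
    apply mem_SS_of_J h l
    rcases hs with rfl | rfl
    · simp only [one_smul] at g1 g2 g3 g4
      exact Or.inr (conjAssoc_of_T h _ g1 g2 g3 g4)
    · simp only [neg_smul, one_smul] at g1 g2 g3 g4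
      exact Or.inl (assoc_of_T h _ g1 g2 g3 g4)
  have fin0 : ∀ s : ℝ, (s = 1 ∨ s = -1) → a = s → b = s → c = s → d = s → m ∈ SS sm := by
    intro s hs e1 e2 e3 e4
    rw [e1] at hA; rw [e2] at hB; rw [e3] at hC; rw [e4] at hD
    apply good0
    rcases hs with rfl | rfl
    · simp only [one_smul] at hA hB hC hD
      exact Or.inr (conjAssoc_of_T h _ hA hB hC hD)
    · simp only [neg_smul, one_smul] at hA hB hC hD
      exact Or.inl (assoc_of_T h _ hA hB hC hD)
  have p1 : (1 : ℝ) = 1 ∨ (1 : ℝ) = -1 := Or.inl rfl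
  have n1 : (-1 : ℝ) = 1 ∨ (-1 : ℝ) = -1 := Or.inr rfl
  rcases ha with rfl | rfl <;> rcases hb with rfl | rfl <;> rcases hc with rfl | rfl <;>
    rcases hd with rfl | rfl <;>
  first
  | exact fin0 1 p1 rfl rfl rfl rfl
  | exact fin0 (-1) n1 rfl rfl rfl rfl
  | (refine fin 0 1 p1 ?_ ?_ ?_ ?_ <;>
    (first | rw [if_pos (by decide)] | rw [if_neg (by decide)]) <;> norm_num <;> done)
  | (refine fin 1 1 p1 ?_ ?_ ?_ ?_ <;>
    (first | rw [if_pos (by decide)] | rw [if_neg (by decide)]) <;> norm_num <;> done)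
  | (refine fin 2 1 p1 ?_ ?_ ?_ ?_ <;>
    (first | rw [if_pos (by decide)] | rw [if_neg (by decide)]) <;> norm_num <;> done)
  | (refine fin 3 1 p1 ?_ ?_ ?_ ?_ <;>
    (first | rw [if_pos (by decide)] | rw [if_neg (by decide)]) <;> norm_num <;> done)
  | (refine fin 4 1 p1 ?_ ?_ ?_ ?_ <;>
    (first | rw [if_pos (by decide)] | rw [if_neg (by decide)]) <;> norm_num <;> done)
  | (refine fin 5 1 p1 ?_ ?_ ?_ ?_ <;>
    (first | rw [if_pos (by decide)] | rw [if_neg (by decide)]) <;> norm_num <;> done)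
  | (refine fin 6 1 p1 ?_ ?_ ?_ ?_ <;>
    (first | rw [if_pos (by decide)] | rw [if_neg (by decide)]) <;> norm_num <;> done)
  | (refine fin 0 (-1) n1 ?_ ?_ ?_ ?_ <;>
    (first | rw [if_pos (by decide)] | rw [if_neg (by decide)]) <;> norm_num <;> done)
  | (refine fin 1 (-1) n1 ?_ ?_ ?_ ?_ <;>
    (first | rw [if_pos (by decide)] | rw [if_neg (by decide)]) <;> norm_num <;> done)
  | (refine fin 2 (-1) n1 ?_ ?_ ?_ ?_ <;>
    (first | rw [if_pos (by decide)] | rw [if_neg (by decide)]) <;> norm_num <;> done)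
  | (refine fin 3 (-1) n1 ?_ ?_ ?_ ?_ <;>
    (first | rw [if_pos (by decide)] | rw [if_neg (by decide)]) <;> norm_num <;> done)
  | (refine fin 4 (-1) n1 ?_ ?_ ?_ ?_ <;>
    (first | rw [if_pos (by decide)] | rw [if_neg (by decide)]) <;> norm_num <;> done)
  | (refine fin 5 (-1) n1 ?_ ?_ ?_ ?_ <;>
    (first | rw [if_pos (by decide)] | rw [if_neg (by decide)]) <;> norm_num <;> done)
  | (refine fin 6 (-1) n1 ?_ ?_ ?_ ?_ <;>
    (first | rw [if_pos (by decide)] | rw [if_neg (by decide)]) <;> norm_num <;> done)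

theorem range_le_gen {sm : Octo → M → M} (h : IsOMod sm) (x : M) :
    LinearMap.range (Rx h x) ≤ genSubmodule sm x := by
  rintro _ ⟨p, rfl⟩
  exact Set.mem_sInter.mpr fun S hS => hS.1.osmul_mem p hS.2

theorem cyclic_iff {sm : Octo → M → M} (h : IsOMod sm) (x : M) :
    IsOCyclic sm x ↔ LinearMap.range (Rx h x) = genSubmodule sm x := by
  have e : ((LinearMap.range (Rx h x) : Submodule ℝ M) : Set M) = {y | ∃ p, y = sm p x} := by
    ext y
    constructor
    · rintro ⟨p, rfl⟩; exact ⟨p, rfl⟩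
    · rintro ⟨p, rfl⟩; exact ⟨p, rfl⟩
  unfold IsOCyclic
  rw [← e]
  exact ⟨fun hh => SetLike.coe_injective hh.symm,
    fun hh => (congrArg (fun S : Submodule ℝ M => (S : Set M)) hh).symm⟩

theorem cyclic_of_closed {sm : Octo → M → M} (h : IsOMod sm) (x : M)
    (hc : ∀ r q, ∃ s, sm r (sm q x) = sm s x) : IsOCyclic sm x := by
  rw [cyclic_iff h]
  refine le_antisymm (range_le_gen h x) ?_
  intro y hy
  refine Set.mem_sInter.mp hy (LinearMap.range (Rx h x) : Submodule ℝ M)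
    ⟨⟨zero_mem _, fun a b => add_mem a b, fun r _ a => Submodule.smul_mem _ r a, ?_⟩,
      ⟨1, h.one_smul x⟩⟩
  rintro r _ ⟨q, rfl⟩
  obtain ⟨s, hs⟩ := hc r q
  exact ⟨s, hs.symm⟩

theorem cyclic_good {sm : Octo → M → M} (h : IsOMod sm) (p : Octo) (a : M) (ha : Good sm a) :
    IsOCyclic sm (sm p a) := by
  apply cyclic_of_closed h
  intro r q
  by_cases hp : p = 0
  · subst hp
    exact ⟨0, by simp only [zero_sm h, sm_zero h]⟩
  have hn := nsq_ne hp
  rcases ha with h1 | h1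
  · refine ⟨(nsq p)⁻¹ • ((r * (q * p)) * conj p), ?_⟩
    rw [← h1, ← h1, ← h1, smul_mul', mul_conj_mul, smul_smul, inv_mul_cancel₀ hn, one_smul]
  · refine ⟨(nsq p)⁻¹ • (conj p * ((p * q) * r)), ?_⟩
    rw [← h1, ← h1, ← h1, mul_smul', mul_conj_mul', smul_smul, inv_mul_cancel₀ hn, one_smul]

theorem iso_of_finrank {N : Type*} [AddCommGroup N] [Module ℝ N] {sm : Octo → N → N}
    (h : IsOMod sm) (hf : Module.finrank ℝ N = 8) : OIso sm oSmul ∨ OIso sm oBarSmul := by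
  have : FiniteDimensional ℝ N := Module.finite_of_finrank_pos (by omega)
  obtain ⟨a, ha0, ha⟩ : ∃ a : N, a ≠ 0 ∧ Good sm a := by
    by_contra hcon
    push Not at hcon
    have h0 : SS sm ≤ ⊥ := by
      unfold SS
      rw [Submodule.span_le]
      rintro _ ⟨p, a, ha, rfl⟩
      by_cases h0 : a = 0
      · subst h0; simp [sm_zero h]
      · exact absurd ha (hcon a h0)
    have : Subsingleton N := ⟨fun u v => by
      rw [(Submodule.mem_bot ℝ).1 (h0 (SS_all h u)), (Submodule.mem_bot ℝ).1 (h0 (SS_all h v))]⟩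
    rw [Module.finrank_zero_of_subsingleton] at hf
    omega
  rcases ha with h1 | h1
  · left
    let f := LinearEquiv.ofInjectiveOfFinrankEq (Rx h a) (Rx_inj h ha0) (finrank_octo.trans hf.symm)
    have hfa : ∀ p, f p = sm p a := fun p => rfl
    refine ⟨f.symm, ⟨f.symm.toLinearMap.isLinear, ?_⟩, f.symm.bijective⟩
    intro p m
    obtain ⟨q, rfl⟩ := f.surjective m
    rw [LinearEquiv.symm_apply_eq, LinearEquiv.symm_apply_apply, hfa, hfa, oSmul, h1]
  · right
    let f := LinearEquiv.ofInjectiveOfFinrankEq (Rx (conj_mod h) a) (Rx_inj (conj_mod h) ha0)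
      (finrank_octo.trans hf.symm)
    have hfa : ∀ p, f p = sm (conj p) a := fun p => rfl
    refine ⟨f.symm, ⟨f.symm.toLinearMap.isLinear, ?_⟩, f.symm.bijective⟩
    intro p m
    obtain ⟨q, rfl⟩ := f.surjective m
    rw [LinearEquiv.symm_apply_eq, LinearEquiv.symm_apply_apply, hfa, hfa, oBarSmul, Octo.conj_mul,
      conj_conj, h1]

theorem gen_mod {sm : Octo → M → M} (h : IsOMod sm) (x : M) : IsOMod (genSmul sm x) where
  smul_add := fun p m n => Subtype.ext (h.smul_add p m n)
  add_smul := fun p q m => Subtype.ext (h.add_smul p q m)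
  real_smul := fun r p m => Subtype.ext (h.real_smul r p m)
  smul_real := fun r p m => Subtype.ext (h.smul_real r p m)
  one_smul := fun m => Subtype.ext (h.one_smul m)
  alt := fun p q m => Subtype.ext (h.alt p q m)

theorem finrank_of_iso {N : Type*} [AddCommGroup N] [Module ℝ N] {sm : Octo → N → N}
    {sm' : Octo → Octo → Octo} (hi : OIso sm sm') : Module.finrank ℝ N = 8 := by
  obtain ⟨f, ⟨hl, _⟩, hb⟩ := hi
  rw [← finrank_octo]
  exact (LinearEquiv.ofBijective (hl.mk' f) hb).finrank_eq

end Main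

theorem stmt19 {M : Type*} [AddCommGroup M] [Module ℝ M]
    (sm : Octo → M → M) (h : IsOMod sm) (x : M) (hx : x ≠ 0) :
    ((IsOCyclic sm x ↔ Module.finrank ℝ (genSubmodule sm x) = 8) ∧
     (IsOCyclic sm x ↔ (OIso (genSmul sm x) oSmul ∨ OIso (genSmul sm x) oBarSmul))) ∧
    Submodule.span ℝ {m : M | IsOCyclic sm m} = ⊤ := by
  have hr : Module.finrank ℝ (LinearMap.range (Rx h x)) = 8 := by
    rw [LinearMap.finrank_range_of_inj (Rx_inj h hx), finrank_octo]
  have h12 : IsOCyclic sm x ↔ Module.finrank ℝ (genSubmodule sm x) = 8 := by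
    rw [cyclic_iff h]
    constructor
    · intro e; rw [← e, hr]
    · intro e
      have : FiniteDimensional ℝ (genSubmodule sm x) := Module.finite_of_finrank_pos (by omega)
      exact Submodule.eq_of_le_of_finrank_eq (range_le_gen h x) (hr.trans e.symm)
  refine ⟨⟨h12, h12.trans ⟨iso_of_finrank (gen_mod h x), ?_⟩⟩, ?_⟩
  · rintro (hi | hi) <;> exact finrank_of_iso hi
  · rw [eq_top_iff]
    intro m _
    have hle : SS sm ≤ Submodule.span ℝ {m : M | IsOCyclic sm m} := by
      unfold SS
      apply Submodule.span_mono
      rintro _ ⟨p, a, ha, rfl⟩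
      exact cyclic_good h p a ha
    exact hle (SS_all h m)
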